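/- Let 0 < β < α < π. Then the quantum binomial [⌊αn/π⌋ ¦ ⌊βn/π⌋], taken with respect to ξ = exp(π√−1/n), is a positive real number for all sufficiently large n, and lim_{n→∞} (π/n) · log [⌊αn/π⌋ ¦ ⌊βn/π⌋] = −Λ(α) + Λ(β) + Λ(α−β). -/

import Mathlib

open Complex Finset Filter
open scoped Matrix Kronecker Real

noncomputable section

/-- `ξ^a = exp(π √-1 a / n)` for the `2n`-th root of unity `ξ = exp(π √-1/n)`. -/
def xic (n : ℕ) (a : ℂ) : ℂ := Complex.exp (Real.pi * Complex.I * a / n)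

/-- `{a} = ξ^a - ξ^{-a}`. -/
def qn (n : ℕ) (a : ℂ) : ℂ := xic n a - xic n (-a)

/-- `{k}! = {1}{2}⋯{k}`. -/
def qfac (n : ℕ) (k : ℕ) : ℂ := ∏ j ∈ Finset.range k, qn n ((j : ℂ) + 1)

-- The quantum binomial `[a¦b]`, defined (and nonzero) only when `a - b ∈ {0,1,…,n-1}`.
open Classical in
def qbin (n : ℕ) (a b : ℂ) : ℂ :=
  if h : ∃ k : ℕ, k < n ∧ a - b = (k : ℂ) then
    ∏ j ∈ Finset.range h.choose, qn n (a - (j : ℂ)) / qn n (a - b - (j : ℂ))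
  else 0

/-- `[a] = {a}/{1}`. -/
def qint (n : ℕ) (a : ℂ) : ℂ := qn n a / qn n 1

/-- `a` is not a half-integer. -/
def NotHalfInt (a : ℂ) : Prop := ∀ m : ℤ, a ≠ (m : ℂ) / 2

/-- `x ∈ {0, 1, …, n-1}` (as a complex number). -/
def InZn (n : ℕ) (x : ℂ) : Prop := ∃ k : ℕ, k < n ∧ x = (k : ℂ)

/-- The matrix of `E` on `V^a = ℂ^n`: `E e_j = [j] e_{j-1}` (independent of `a`). -/
def Emat (n : ℕ) : Matrix (Fin n) (Fin n) ℂ :=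
  Matrix.of fun i j => if (j : ℕ) = (i : ℕ) + 1 then qint n ((j : ℕ) : ℂ) else 0

/-- The matrix of `F` on `V^a`: `F e_j = [2a-j] e_{j+1}` (with `e_n = 0`). -/
def Fmat (n : ℕ) (a : ℂ) : Matrix (Fin n) (Fin n) ℂ :=
  Matrix.of fun i j => if (i : ℕ) = (j : ℕ) + 1 then qint n (2 * a - ((j : ℕ) : ℂ)) else 0

/-- The matrix of `K` on `V^a`: `K e_j = ξ^{a-j} e_j`. -/
def Kmat (n : ℕ) (a : ℂ) : Matrix (Fin n) (Fin n) ℂ :=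
  Matrix.of fun i j => if i = j then xic n (a - ((i : ℕ) : ℂ)) else 0

/-- The matrix of `K⁻¹` on `V^a`. -/
def Kinvmat (n : ℕ) (a : ℂ) : Matrix (Fin n) (Fin n) ℂ :=
  Matrix.of fun i j => if i = j then xic n (-(a - ((i : ℕ) : ℂ))) else 0

/-- The `R`-matrix `R_{a,b} : V^a ⊗ V^b → V^b ⊗ V^a`:
`R(e_u ⊗ e_v) = Σ_m {m}! ξ^{2(a-u)(b-v) - m(a-b-u+v) - m(m+1)/2} [u¦u-m] [2b-v¦2b-v-m]
e_{v+m} ⊗ e_{u-m}`; the entry at row `(h,k)`, column `(u,v)` is the coefficient of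
`e_h ⊗ e_k`, nonzero only when `h + k = u + v` and `h ≥ v` (with `m = h - v`). -/
def Rmat (n : ℕ) (a b : ℂ) : Matrix (Fin n × Fin n) (Fin n × Fin n) ℂ :=
  Matrix.of fun p q =>
    if ((p.1 : ℕ) + (p.2 : ℕ) = (q.1 : ℕ) + (q.2 : ℕ)) ∧ ((q.2 : ℕ) ≤ (p.1 : ℕ)) then
      (fun m : ℕ =>
        qfac n m *
        xic n (2 * (a - ((q.1 : ℕ) : ℂ)) * (b - ((q.2 : ℕ) : ℂ))
            - (m : ℂ) * (a - b - ((q.1 : ℕ) : ℂ) + ((q.2 : ℕ) : ℂ))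
            - (m : ℂ) * ((m : ℂ) + 1) / 2) *
        qbin n ((q.1 : ℕ) : ℂ) (((q.1 : ℕ) : ℂ) - (m : ℂ)) *
        qbin n (2 * b - ((q.2 : ℕ) : ℂ)) (2 * b - ((q.2 : ℕ) : ℂ) - (m : ℂ)))
      ((p.1 : ℕ) - (q.2 : ℕ))
    else 0

/-- The Clebsch-Gordan quantum coefficient `C^{a,b,c}_{u,v,t}`. -/
def CG (n : ℕ) (a b c : ℂ) (u v t : ℕ) : ℂ :=
  Complex.exp (Real.pi * Complex.I * (c - a - b) / 2) *
  (-1 : ℂ) ^ ((v : ℤ) - (t : ℤ)) *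
  xic n (((v : ℂ) * (2 * b - (v : ℂ) + 1) - (u : ℂ) * (2 * a - (u : ℂ) + 1)) / 2) *
  (qbin n (2 * c) (2 * c - (t : ℂ)))⁻¹ *
  qbin n (2 * c) (a + b + c - ((n : ℂ) - 1)) *
  ∑ z ∈ Finset.range (t + 1),
    (-1 : ℂ) ^ z * xic n ((2 * (z : ℂ) - (t : ℂ)) * (2 * c - (t : ℂ) + 1) / 2) *
    qbin n (a + b - c) ((u : ℂ) - (z : ℂ)) *
    qbin n (2 * a - (u : ℂ) + (z : ℂ)) (2 * a - (u : ℂ)) *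
    qbin n (2 * b - (v : ℂ) + ((t : ℂ) - (z : ℂ))) (2 * b - (v : ℂ))

-- The inclusion `Y_c^{a,b} : V^c → V^a ⊗ V^b`.
open Classical in
def Yinc (n : ℕ) (a b c : ℂ) : Matrix (Fin n × Fin n) (Fin n) ℂ :=
  Matrix.of fun p t =>
    if ((p.1 : ℕ) : ℂ) + ((p.2 : ℕ) : ℂ) - ((t : ℕ) : ℂ) = a + b - c then
      CG n a b c (p.1 : ℕ) (p.2 : ℕ) (t : ℕ)
    else 0

-- The projection `Y_{a,b}^c : V^a ⊗ V^b → V^c`.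
open Classical in
def Yproj (n : ℕ) (a b c : ℂ) : Matrix (Fin n) (Fin n × Fin n) ℂ :=
  Matrix.of fun t p =>
    if ((p.1 : ℕ) : ℂ) + ((p.2 : ℕ) : ℂ) - ((t : ℕ) : ℂ) = a + b - c then
      CG n ((n : ℂ) - 1 - b) ((n : ℂ) - 1 - a) ((n : ℂ) - 1 - c)
        (n - 1 - (p.2 : ℕ)) (n - 1 - (p.1 : ℕ)) (n - 1 - (t : ℕ))
    else 0

-- Extracts the natural number `k` with `x = k` (0 if there is none).
open Classical in
def natIdx (x : ℂ) : ℕ := if h : ∃ k : ℕ, x = (k : ℂ) then h.choose else 0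

/-- The `SL(2,ℂ)` quantum 6j-symbol `{a b e; d c f}_ξ`. -/
def sixj (n : ℕ) (a b e d c f : ℂ) : ℂ :=
  (-1 : ℂ) ^ (n - 1 + natIdx (a + f - c)) *
  (qbin n (2 * f + (n : ℂ)) (2 * f + 1))⁻¹ *
  (qfac n (natIdx (d + e - c)) * qfac n (natIdx (a + b - e)) /
    (qfac n (natIdx (b + d - f)) * qfac n (natIdx (a + f - c)))) *
  qbin n (2 * e) (a + b + e + 1 - (n : ℂ)) *
  (qbin n (2 * e) (e + c - d))⁻¹ *
  ∑ z ∈ Finset.Icc (natIdx (d + e - c) - natIdx (b + d - f))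
      (min (natIdx (d + e - c)) (natIdx (a + f - c))),
    (-1 : ℂ) ^ z * qbin n (a + f + c + 1) (2 * c + (z : ℂ) + 1) *
    qbin n ((a + c - f) + (z : ℂ)) (a + c - f) *
    qbin n ((b + f - d) + (d + e - c) - (z : ℂ)) (b + f - d) *
    qbin n ((d + c - e) + (z : ℂ)) (d + f - b)

/-- The tetrahedral symbol `{a b e; d c f}_tet = {a b e; d c f}_ξ · [2f+n¦2f+1]`. -/
def sixjtet (n : ℕ) (a b e d c f : ℂ) : ℂ :=
  sixj n a b e d c f * qbin n (2 * f + (n : ℂ)) (2 * f + 1)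

/-- The Lobachevsky function `Λ(x) = -∫_0^x log|2 sin t| dt`. -/
def lob (x : ℝ) : ℝ := -∫ t in (0 : ℝ)..x, Real.log |2 * Real.sin t|

/-- A triple of integers is admissible. -/
def Admissible (n : ℕ) (i j k : ℤ) : Prop :=
  0 < i ∧ 0 < j ∧ 0 < k ∧ i < (n : ℤ) - 1 ∧ j < (n : ℤ) - 1 ∧ k < (n : ℤ) - 1 ∧
  (n : ℤ) - 1 < i + j + k ∧ i + j + k < 2 * ((n : ℤ) - 1) ∧
  0 < i + j - k ∧ 0 < j + k - i ∧ 0 < k + i - j ∧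
  i + j - k < (n : ℤ) - 1 ∧ j + k - i < (n : ℤ) - 1 ∧ k + i - j < (n : ℤ) - 1

/-!
For natural numbers, `{k} = 2 sin (π k / n) √-1`, so `{k}!` is `√-1 ^ k` times a product of sines
and `[a¦b] = {a}! / ({b}! {a - b}!)` is a quotient of three such products, the powers of `√-1`
cancelling. When `m π / n → γ < π`, `π / n` times the logarithm of the product for `m` is a Riemann
sum of `t ↦ log |2 sin t|`, with limit `∫_0^γ log |2 sin t| dt = -Λ(γ)`. The integrand is singular
at `0`, so the limit is taken by dominated convergence: every tag is the right end point of its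
cell, and an antitone bound for the integrand therefore also bounds the step functions.
-/

open scoped Interval Topology

section RiemannSum

open MeasureTheory Set

/-- The least natural multiple of `h` that is at least `t` (for `0 < h`): the right end point of the
cell `(k h, (k + 1) h]` containing `t > 0`. It makes a right Riemann sum the integral of a step
function. -/
def gridCeil (h t : ℝ) : ℝ := ⌈t / h⌉₊ * h

variable {h t : ℝ}

lemma le_gridCeil (hh : 0 < h) : t ≤ gridCeil h t :=
  (div_le_iff₀ hh).1 (Nat.le_ceil _)

lemma gridCeil_le_natCast_mul {m : ℕ} (hh : 0 < h) (ht : t ≤ m * h) : gridCeil h t ≤ m * h := by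
  have : ⌈t / h⌉₊ ≤ m := Nat.ceil_le.2 ((div_le_iff₀ hh).2 ht)
  unfold gridCeil
  gcongr

lemma gridCeil_of_mem_Ioc {k : ℕ} (hh : 0 < h) (ht : t ∈ Ioc (k * h) ((k + 1 : ℕ) * h)) :
    gridCeil h t = (k + 1 : ℕ) * h := by
  have : ⌈t / h⌉₊ = k + 1 :=
    (Nat.ceil_eq_iff k.succ_ne_zero).2 ⟨(lt_div_iff₀ hh).2 ht.1, (div_le_iff₀ hh).2 ht.2⟩
  rw [gridCeil, this]

lemma tendsto_gridCeil (ht : 0 ≤ t) : Tendsto (gridCeil · t) (𝓝[>] 0) (𝓝 t) := by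
  simpa only [Function.comp_def, ← div_eq_mul_inv, div_inv_eq_mul, gridCeil] using
    (tendsto_nat_ceil_mul_div_atTop ht).comp tendsto_inv_nhdsGT_zero

variable {E : Type*} [NormedAddCommGroup E] {f : ℝ → E}

lemma stronglyMeasurable_comp_gridCeil (f : ℝ → E) (h : ℝ) :
    StronglyMeasurable fun t ↦ f (gridCeil h t) :=
  (StronglyMeasurable.of_discrete (f := fun k : ℕ ↦ f (k * h))).comp_measurable
    (Nat.measurable_ceil.comp (measurable_id.div_const h))

lemma norm_indicator_comp_gridCeil_le {g : ℝ → ℝ} {c : ℝ} {m : ℕ} (hg : AntitoneOn g (Ioc 0 c))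
    (hfg : ∀ t ∈ Ioc 0 c, ‖f t‖ ≤ g t) (hh : 0 < h) (hmc : m * h ≤ c) (ht : t ∈ Ioc 0 c) :
    ‖(Iic (m * h)).indicator (fun t ↦ f (gridCeil h t)) t‖ ≤ g t := by
  by_cases htm : t ≤ m * h
  · have hs : gridCeil h t ∈ Ioc 0 c :=
      ⟨ht.1.trans_le (le_gridCeil hh), (gridCeil_le_natCast_mul hh htm).trans hmc⟩
    rw [indicator_of_mem (Set.mem_Iic.2 htm)]
    exact (hfg _ hs).trans (hg ht hs (le_gridCeil hh))
  · rw [indicator_of_notMem (by exact htm), norm_zero]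
    exact (norm_nonneg _).trans (hfg t ht)

lemma tendsto_indicator_comp_gridCeil {ι : Type*} {l : Filter ι} {x h : ι → ℝ} {γ : ℝ}
    (hf : ContinuousOn f (Ioo 0 γ)) (hh : Tendsto h l (𝓝[>] 0)) (hx : Tendsto x l (𝓝 γ))
    (ht : 0 < t) (htγ : t ≠ γ) :
    Tendsto (fun n ↦ (Iic (x n)).indicator (fun t ↦ f (gridCeil (h n) t)) t) l
      (𝓝 ((Iic γ).indicator f t)) := by
  rcases htγ.lt_or_gt with hlt | hgt
  · rw [indicator_of_mem (Set.mem_Iic.2 hlt.le)]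
    have hft : ContinuousAt f t := hf.continuousAt (Ioo_mem_nhds ht hlt)
    refine (hft.tendsto.comp ((tendsto_gridCeil ht.le).comp hh)).congr' ?_
    filter_upwards [hx.eventually_const_lt hlt] with n hn
    exact (indicator_of_mem (Set.mem_Iic.2 hn.le) fun t ↦ f (gridCeil (h n) t)).symm
  · rw [indicator_of_notMem (by simpa using hgt)]
    refine tendsto_const_nhds.congr' ?_
    filter_upwards [hx.eventually_lt_const hgt] with n hn
    rw [indicator_of_notMem (by simpa using hn)]

variable [NormedSpace ℝ E]

lemma integral_comp_gridCeil [CompleteSpace E] (f : ℝ → E) (hh : 0 < h) (m : ℕ) :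
    ∫ t in (0 : ℝ)..m * h, f (gridCeil h t) = h • ∑ i ∈ range m, f ((i + 1) * h) := by
  have f_gridCeil_eq (k : ℕ) : EqOn (fun _ ↦ f ((k + 1 : ℕ) * h)) (fun t ↦ f (gridCeil h t))
      (Ι (k * h) ((k + 1 : ℕ) * h)) := by
    intro t ht
    rw [uIoc_of_le (by gcongr; exact k.le_succ)] at ht
    simp only [gridCeil_of_mem_Ioc hh ht]
  have integral_cell (k : ℕ) :
      ∫ t in (k * h)..(k + 1 : ℕ) * h, f (gridCeil h t) = h • f ((k + 1) * h) := by
    rw [← intervalIntegral.integral_congr_ae (.of_forall (f_gridCeil_eq k)),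
      intervalIntegral.integral_const]
    push_cast
    ring_nf
  have integral_eq_sum := intervalIntegral.sum_integral_adjacent_intervals (μ := volume)
    (a := fun k : ℕ ↦ k * h) (n := m)
    fun k _ ↦ intervalIntegrable_const.congr (f_gridCeil_eq k)
  simp only [Nat.cast_zero, zero_mul, integral_cell] at integral_eq_sum
  rw [← integral_eq_sum, Finset.smul_sum]

theorem tendsto_riemannSum_of_norm_le_antitone [CompleteSpace E] {ι : Type*} {l : Filter ι}
    [l.NeBot] [l.IsCountablyGenerated] {g : ℝ → ℝ} {c γ : ℝ} {h : ι → ℝ} {m : ι → ℕ} (hγc : γ < c)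
    (hf : ContinuousOn f (Ioo 0 γ)) (hfg : ∀ t ∈ Ioc 0 c, ‖f t‖ ≤ g t)
    (hg : AntitoneOn g (Ioc 0 c)) (hgi : IntervalIntegrable g volume 0 c)
    (hh : Tendsto h l (𝓝[>] 0)) (hm : Tendsto (fun n ↦ m n * h n) l (𝓝 γ)) :
    Tendsto (fun n ↦ h n • ∑ i ∈ range (m n), f ((i + 1) * h n)) l
      (𝓝 (∫ t in (0 : ℝ)..γ, f t)) := by
  have hpos : ∀ᶠ n in l, 0 < h n := hh self_mem_nhdsWithin
  have hmc : ∀ᶠ n in l, m n * h n < c := hm.eventually_lt_const hγc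
  have hγ : 0 ≤ γ := ge_of_tendsto hm (hpos.mono fun n hn ↦ by positivity)
  have tendsto_integral : Tendsto
      (fun n ↦ ∫ t in (0 : ℝ)..c, (Iic (m n * h n)).indicator (fun t ↦ f (gridCeil (h n) t)) t) l
      (𝓝 (∫ t in (0 : ℝ)..c, (Iic γ).indicator f t)) := by
    refine intervalIntegral.tendsto_integral_filter_of_dominated_convergence g ?_ ?_ hgi ?_
    · exact .of_forall fun n ↦
        (stronglyMeasurable_comp_gridCeil f (h n)).indicator measurableSet_Iic
          |>.aestronglyMeasurable
    · filter_upwards [hpos, hmc] with n hn hmn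
      refine .of_forall fun t ht ↦ norm_indicator_comp_gridCeil_le hg hfg hn hmn.le ?_
      rwa [uIoc_of_le (hγ.trans hγc.le)] at ht
    · filter_upwards [Measure.ae_ne volume γ] with t htγ ht
      rw [uIoc_of_le (hγ.trans hγc.le)] at ht
      exact tendsto_indicator_comp_gridCeil hf hh hm ht.1 htγ
  rw [show Iic γ = {t | t ≤ γ} from rfl,
    intervalIntegral.integral_indicator ⟨hγ, hγc.le⟩] at tendsto_integral
  refine tendsto_integral.congr' ?_
  filter_upwards [hpos, hmc] with n hn hmn
  rw [← integral_comp_gridCeil f hn]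
  exact intervalIntegral.integral_indicator ⟨by positivity, hmn.le⟩

end RiemannSum

section LogSine

open MeasureTheory Set

variable {c t : ℝ}

lemma sin_div_mul_le_sin (hc : c ≤ π) (ht : t ∈ Ioc 0 c) :
    Real.sin c / c * t ≤ Real.sin t := by
  have hc0 : 0 < c := ht.1.trans_le ht.2
  have chord_le := strictConcaveOn_sin_Icc.concaveOn.2 (left_mem_Icc.2 Real.pi_pos.le)
    ⟨hc0.le, hc⟩ (sub_nonneg.2 ((div_le_one hc0).2 ht.2)) (div_nonneg ht.1.le hc0.le)
    (sub_add_cancel 1 (t / c))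
  simp only [smul_eq_mul, Real.sin_zero, mul_zero, zero_add, div_mul_cancel₀ _ hc0.ne'] at chord_le
  rwa [div_mul_comm]

lemma norm_log_two_mul_sin_le (hc : c < π) (ht : t ∈ Ioc 0 c) :
    ‖Real.log |2 * Real.sin t|‖ ≤ Real.log 2 - Real.log (Real.sin c / c * t) := by
  have hc0 : 0 < c := ht.1.trans_le ht.2
  have hsc : 0 < Real.sin c := Real.sin_pos_of_pos_of_lt_pi hc0 hc
  have hst : 0 < Real.sin t := Real.sin_pos_of_pos_of_lt_pi ht.1 (ht.2.trans_lt hc)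
  have ht0 : 0 < t := ht.1
  calc ‖Real.log |2 * Real.sin t|‖
      = |Real.log 2 + Real.log (Real.sin t)| := by
        rw [Real.norm_eq_abs, Real.log_abs, Real.log_mul two_ne_zero hst.ne']
    _ ≤ |Real.log 2| + |Real.log (Real.sin t)| := abs_add_le _ _
    _ = Real.log 2 - Real.log (Real.sin t) := by
        rw [abs_of_pos (Real.log_pos one_lt_two),
          abs_of_nonpos (Real.log_nonpos hst.le (Real.sin_le_one t)), sub_eq_add_neg]
    _ ≤ Real.log 2 - Real.log (Real.sin c / c * t) := by
        gcongr
        exact sin_div_mul_le_sin hc.le ht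

theorem tendsto_riemannSum_log_two_mul_sin {ι : Type*} {l : Filter ι} [l.NeBot]
    [l.IsCountablyGenerated] {γ : ℝ} {h : ι → ℝ} {m : ι → ℕ} (hγ : γ < π)
    (hh : Tendsto h l (𝓝[>] 0)) (hm : Tendsto (fun n ↦ m n * h n) l (𝓝 γ)) :
    Tendsto (fun n ↦ h n * ∑ i ∈ range (m n), Real.log |2 * Real.sin ((i + 1) * h n)|) l
      (𝓝 (-lob γ)) := by
  obtain ⟨c, hc, hcπ⟩ := exists_between (max_lt hγ Real.pi_pos)
  obtain ⟨hγc, hc0⟩ := max_lt_iff.1 hc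
  have hr : 0 < Real.sin c / c := div_pos (Real.sin_pos_of_pos_of_lt_pi hc0 hcπ) hc0
  have continuousOn_log : ContinuousOn (fun t ↦ Real.log |2 * Real.sin t|) (Ioo 0 γ) := by
    refine ContinuousOn.log (by fun_prop) fun t ht ↦ abs_ne_zero.2 (mul_ne_zero two_ne_zero ?_)
    exact (Real.sin_pos_of_pos_of_lt_pi ht.1 (ht.2.trans hγ)).ne'
  have antitone_bound :
      AntitoneOn (fun t ↦ Real.log 2 - Real.log (Real.sin c / c * t)) (Ioc 0 c) := by
    intro s hs t _ hst
    have hs0 : 0 < s := hs.1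
    dsimp only
    gcongr
  have integrable_bound :
      IntervalIntegrable (fun t ↦ Real.log 2 - Real.log (Real.sin c / c * t)) volume 0 c := by
    refine intervalIntegrable_const.sub ?_
    simpa [hr.ne'] using (intervalIntegral.intervalIntegrable_log' (a := Real.sin c / c * 0)
      (b := Real.sin c / c * c)).comp_mul_left (c := Real.sin c / c)
  simpa only [lob, neg_neg, smul_eq_mul] using
    tendsto_riemannSum_of_norm_le_antitone hγc continuousOn_log
      (fun t ht ↦ norm_log_two_mul_sin_le hcπ ht) antitone_bound integrable_bound hh hm

end LogSine

section QuantumBinomial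

variable {n k : ℕ}

/-- The real counterpart of the quantum factorial: `{k}! = √-1 ^ k * sineFactorial n k`. -/
def sineFactorial (n k : ℕ) : ℝ := ∏ j ∈ range k, 2 * Real.sin ((j + 1) * (π / n))

lemma two_mul_sin_succ_mul_pos (hk : k + 1 < n) : 0 < 2 * Real.sin ((k + 1) * (π / n)) := by
  have hn : (0 : ℝ) < n := by exact_mod_cast k.succ_pos.trans hk
  refine mul_pos two_pos (Real.sin_pos_of_pos_of_lt_pi (by positivity) ?_)
  calc (k + 1) * (π / n) < n * (π / n) := by gcongr; exact_mod_cast hk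
    _ = π := mul_div_cancel₀ π hn.ne'

lemma sineFactorial_pos (hk : k < n) : 0 < sineFactorial n k :=
  Finset.prod_pos fun j hj ↦ two_mul_sin_succ_mul_pos (by grind)

lemma log_sineFactorial (hk : k < n) :
    Real.log (sineFactorial n k) = ∑ j ∈ range k, Real.log |2 * Real.sin ((j + 1) * (π / n))| := by
  simp only [Real.log_abs]
  exact Real.log_prod fun j hj ↦ (two_mul_sin_succ_mul_pos (by grind)).ne'

lemma qn_eq_two_mul_sin_mul_I (n : ℕ) (a : ℂ) : qn n a = 2 * Complex.sin (a * (π / n)) * I := by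
  rw [Complex.two_sin, mul_assoc, I_mul_I, qn, xic, xic]
  ring_nf

lemma qfac_eq_I_pow_mul_sineFactorial (n k : ℕ) : qfac n k = I ^ k * sineFactorial n k := by
  simp [qfac, sineFactorial, qn_eq_two_mul_sin_mul_I, mul_comm _ I, Finset.prod_mul_distrib]

lemma qfac_ne_zero (hk : k < n) : qfac n k ≠ 0 := by
  rw [qfac_eq_I_pow_mul_sineFactorial]
  exact mul_ne_zero (pow_ne_zero k I_ne_zero) (ofReal_ne_zero.2 (sineFactorial_pos hk).ne')

lemma qfac_add (n b k : ℕ) :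
    qfac n (b + k) = qfac n b * ∏ j ∈ range k, qn n ((b + k : ℕ) - j) := by
  rw [qfac, Finset.prod_range_add, qfac,
    ← Finset.prod_range_reflect (fun j ↦ qn n ((b + k : ℕ) - j))]
  congr 1
  refine Finset.prod_congr rfl fun j hj ↦ ?_
  have hjk : j + 1 ≤ k := Finset.mem_range.1 hj
  rw [Nat.sub_sub, add_comm 1 j]
  push_cast [hjk]
  ring_nf

lemma qfac_eq_prod_qn_sub (n k : ℕ) : qfac n k = ∏ j ∈ range k, qn n (k - j) := by
  simpa [qfac] using qfac_add n 0 k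

lemma qbin_eq_prod {a b : ℂ} (hk : k < n) (hab : a - b = k) :
    qbin n a b = ∏ j ∈ range k, qn n (a - j) / qn n (a - b - j) := by
  have h : ∃ k : ℕ, k < n ∧ a - b = k := ⟨k, hk, hab⟩
  have choose_eq : h.choose = k := by exact_mod_cast h.choose_spec.2.symm.trans hab
  rw [qbin, dif_pos h, choose_eq]

lemma qbin_natCast_add {b : ℕ} (hb : b < n) (hk : k < n) :
    qbin n (b + k : ℕ) b = qfac n (b + k) / (qfac n b * qfac n k) := by
  have hsub : ((b + k : ℕ) : ℂ) - b = k := by push_cast; ring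
  rw [qbin_eq_prod hk hsub, hsub, Finset.prod_div_distrib, ← qfac_eq_prod_qn_sub, qfac_add,
    mul_div_mul_left _ _ (qfac_ne_zero hb)]

lemma qbin_natCast {a b : ℕ} (hba : b ≤ a) (han : a < n) :
    qbin n a b =
      (sineFactorial n a / (sineFactorial n b * sineFactorial n (a - b)) : ℝ) := by
  obtain ⟨k, rfl⟩ := Nat.exists_eq_add_of_le hba
  rw [qbin_natCast_add (by lia) (by lia), Nat.add_sub_cancel_left]
  simp only [qfac_eq_I_pow_mul_sineFactorial]
  push_cast
  rw [mul_mul_mul_comm, ← pow_add, mul_div_mul_left _ _ (pow_ne_zero _ I_ne_zero)]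

lemma qbin_natCast_re_pos {a b : ℕ} (hba : b ≤ a) (han : a < n) : 0 < (qbin n a b).re := by
  rw [qbin_natCast hba han, ofReal_re]
  exact div_pos (sineFactorial_pos han)
    (mul_pos (sineFactorial_pos (by lia)) (sineFactorial_pos (by lia)))

lemma qbin_natCast_im {a b : ℕ} (hba : b ≤ a) (han : a < n) : (qbin n a b).im = 0 := by
  rw [qbin_natCast hba han, ofReal_im]

lemma log_qbin_natCast_re {a b : ℕ} (hba : b ≤ a) (han : a < n) :
    Real.log (qbin n a b).re = Real.log (sineFactorial n a) - Real.log (sineFactorial n b) -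
      Real.log (sineFactorial n (a - b)) := by
  have ha := (sineFactorial_pos han).ne'
  have hb := (sineFactorial_pos (hba.trans_lt han)).ne'
  have hab := (sineFactorial_pos ((a.sub_le b).trans_lt han)).ne'
  rw [qbin_natCast hba han, ofReal_re, Real.log_div ha (mul_ne_zero hb hab), Real.log_mul hb hab,
    sub_add_eq_sub_sub]

end QuantumBinomial

section Asymptotics

variable {γ : ℝ} {m : ℕ → ℕ}

lemma tendsto_pi_div_natCast_nhdsGT_zero : Tendsto (fun n : ℕ ↦ π / n) atTop (𝓝[>] 0) := by
  refine tendsto_nhdsWithin_iff.2 ⟨tendsto_const_div_atTop_nhds_zero_nat π, ?_⟩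
  filter_upwards [eventually_gt_atTop 0] with n hn
  exact div_pos Real.pi_pos (Nat.cast_pos.2 hn)

lemma tendsto_floor_mul_div_pi_mul (hγ : 0 ≤ γ) :
    Tendsto (fun n : ℕ ↦ ⌊γ * n / π⌋₊ * (π / n)) atTop (𝓝 γ) := by
  have tendsto_floor_div : Tendsto (fun n : ℕ ↦ (⌊γ / π * n⌋₊ : ℝ) / n) atTop (𝓝 (γ / π)) :=
    (tendsto_nat_floor_mul_div_atTop (by positivity)).comp tendsto_natCast_atTop_atTop
  have tendsto_mul_pi := tendsto_floor_div.mul_const π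
  rw [div_mul_cancel₀ γ Real.pi_ne_zero] at tendsto_mul_pi
  refine tendsto_mul_pi.congr fun n ↦ ?_
  rw [div_mul_eq_mul_div, div_mul_eq_mul_div, mul_div_assoc]

lemma eventually_lt_self_of_tendsto_mul_pi_div (hγ : γ < π)
    (hm : Tendsto (fun n : ℕ ↦ m n * (π / n)) atTop (𝓝 γ)) : ∀ᶠ n in atTop, m n < n := by
  filter_upwards [hm.eventually_lt_const hγ, eventually_gt_atTop 0] with n hn hn0
  have hn0' : (0 : ℝ) < n := Nat.cast_pos.2 hn0
  rw [mul_div_left_comm, mul_lt_iff_lt_one_right Real.pi_pos, div_lt_one hn0'] at hn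
  exact_mod_cast hn

lemma tendsto_log_sineFactorial (hγ : γ < π)
    (hm : Tendsto (fun n : ℕ ↦ m n * (π / n)) atTop (𝓝 γ)) :
    Tendsto (fun n : ℕ ↦ π / n * Real.log (sineFactorial n (m n))) atTop (𝓝 (-lob γ)) := by
  refine (tendsto_riemannSum_log_two_mul_sin hγ tendsto_pi_div_natCast_nhdsGT_zero hm).congr' ?_
  filter_upwards [eventually_lt_self_of_tendsto_mul_pi_div hγ hm] with n hn
  rw [log_sineFactorial hn]

lemma tendsto_log_qbin {α β : ℝ} {a b : ℕ → ℕ} (hα : α < π) (hba : ∀ᶠ n in atTop, b n ≤ a n)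
    (ha : Tendsto (fun n : ℕ ↦ a n * (π / n)) atTop (𝓝 α))
    (hb : Tendsto (fun n : ℕ ↦ b n * (π / n)) atTop (𝓝 β)) :
    Tendsto (fun n : ℕ ↦ π / n * Real.log (qbin n (a n) (b n)).re) atTop
      (𝓝 (-lob α + lob β + lob (α - β))) := by
  have hβ : 0 ≤ β := ge_of_tendsto' hb fun n ↦ by positivity
  have hβα : β ≤ α := by
    refine le_of_tendsto_of_tendsto hb ha (hba.mono fun n hn ↦ ?_)
    dsimp only
    gcongr
  have hab : Tendsto (fun n : ℕ ↦ (a n - b n : ℕ) * (π / n)) atTop (𝓝 (α - β)) := by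
    refine (ha.sub hb).congr' (hba.mono fun n hn ↦ ?_)
    simp only [Nat.cast_sub hn, sub_mul]
  have tendsto_sub := ((tendsto_log_sineFactorial hα ha).sub
    (tendsto_log_sineFactorial (hβα.trans_lt hα) hb)).sub
    (tendsto_log_sineFactorial (by linarith) hab)
  rw [sub_neg_eq_add, sub_neg_eq_add] at tendsto_sub
  refine tendsto_sub.congr' ?_
  filter_upwards [hba, eventually_lt_self_of_tendsto_mul_pi_div hα ha] with n hn han
  rw [log_qbin_natCast_re hn han, mul_sub, mul_sub]

theorem qbin_floor_asymptotics_general {α β : ℝ} {a b : ℕ → ℕ} (hα : α < π)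
    (hba : ∀ᶠ n in atTop, b n ≤ a n)
    (ha : Tendsto (fun n : ℕ ↦ a n * (π / n)) atTop (𝓝 α))
    (hb : Tendsto (fun n : ℕ ↦ b n * (π / n)) atTop (𝓝 β)) :
    (∀ᶠ n : ℕ in atTop, 0 < (qbin n (a n) (b n)).re ∧ (qbin n (a n) (b n)).im = 0) ∧
    Tendsto (fun n : ℕ ↦ π / n * Real.log (qbin n (a n) (b n)).re) atTop
      (𝓝 (-lob α + lob β + lob (α - β))) := by
  refine ⟨?_, tendsto_log_qbin hα hba ha hb⟩
  filter_upwards [hba, eventually_lt_self_of_tendsto_mul_pi_div hα ha] with n hn han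
  exact ⟨qbin_natCast_re_pos hn han, qbin_natCast_im hn han⟩

end Asymptotics

theorem qbin_floor_asymptotics (α β : ℝ) (hβ : 0 < β) (hβα : β < α) (hα : α < π) :
    (∀ᶠ n : ℕ in atTop,
        0 < (qbin n ((Nat.floor (α * n / π) : ℕ) : ℂ)
              ((Nat.floor (β * n / π) : ℕ) : ℂ)).re ∧
        (qbin n ((Nat.floor (α * n / π) : ℕ) : ℂ)
              ((Nat.floor (β * n / π) : ℕ) : ℂ)).im = 0) ∧
    Tendsto (fun n : ℕ => π / n *
        Real.log ((qbin n ((Nat.floor (α * n / π) : ℕ) : ℂ)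
          ((Nat.floor (β * n / π) : ℕ) : ℂ)).re))
      atTop (nhds (-lob α + lob β + lob (α - β))) :=
  qbin_floor_asymptotics_general hα (.of_forall fun n ↦ Nat.floor_le_floor (by gcongr))
    (tendsto_floor_mul_div_pi_mul (hβ.trans hβα).le) (tendsto_floor_mul_div_pi_mul hβ.le)

end
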